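/- Let A ∈ G(Z,C) and z* ∈ C⁻ \ {0}. If A ⊕ H(z*) ∉ {Z, ∅}, then A −_{z*} A = H(z*); if A ⊕ H(z*) ∈ {Z, ∅}, then A −_{z*} A = Z. -/

import Mathlib

open Set Topology Pointwise

noncomputable section

variable {X Z : Type*}

/-- The family `G(Z,C)` of subsets `A` with `A = cl co (A + C)`. -/
def Gset [AddCommGroup Z] [Module ℝ Z] [TopologicalSpace Z] (C : Set Z) : Set (Set Z) :=
  {A | A = closure (convexHull ℝ (A + C))}

/-- `A ⊕ B = cl (A + B)` (Minkowski sum, with `A + ∅ = ∅`). -/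
def oplus [AddCommGroup Z] [TopologicalSpace Z] (A B : Set Z) : Set Z :=
  closure (A + B)

/-- The homogeneous closed half-space `H(z*) = {z : z*(z) ≤ 0}`. -/
def Hset [TopologicalSpace Z] [AddCommGroup Z] [Module ℝ Z] (zs : Z →L[ℝ] ℝ) : Set Z :=
  {z | zs z ≤ 0}

/-- `A −_{z*} B = {z : B + z ⊆ A ⊕ H(z*)}`. -/
def resid [TopologicalSpace Z] [AddCommGroup Z] [Module ℝ Z]
    (zs : Z →L[ℝ] ℝ) (A B : Set Z) : Set Z :=
  {z | ∀ b ∈ B, b + z ∈ oplus A (Hset zs)}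

/-- Convexity of a set-valued function: `f(t x₁ + (1-t) x₂) ⊇ t f(x₁) ⊕ (1-t) f(x₂)`. -/
def ConvexSV [AddCommGroup X] [Module ℝ X] [TopologicalSpace Z] [AddCommGroup Z] [Module ℝ Z]
    (f : X → Set Z) : Prop :=
  ∀ x₁ x₂ : X, ∀ t : ℝ, 0 < t → t < 1 →
    oplus (t • f x₁) ((1 - t) • f x₂) ⊆ f (t • x₁ + (1 - t) • x₂)

/-- Directional derivative `f'_{z*}(x₀, x) = ⋂_{s>0} cl ⋃_{0<t<s} (1/t)(f(x₀+tx) −_{z*} f(x₀))`. -/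
def dirDer [AddCommGroup X] [Module ℝ X] [TopologicalSpace Z] [AddCommGroup Z] [Module ℝ Z]
    (zs : Z →L[ℝ] ℝ) (f : X → Set Z) (x₀ x : X) : Set Z :=
  ⋂ s ∈ Ioi (0:ℝ), closure (⋃ t ∈ Ioo (0:ℝ) s, (1 / t) • resid zs (f (x₀ + t • x)) (f x₀))

/-- `S_{(x*,z*)}(x) = {z : x*(x) + z*(z) ≤ 0}`. -/
def Sfun [TopologicalSpace X] [AddCommGroup X] [Module ℝ X]
    [TopologicalSpace Z] [AddCommGroup Z] [Module ℝ Z]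
    (xs : X →L[ℝ] ℝ) (zs : Z →L[ℝ] ℝ) (x : X) : Set Z :=
  {z | xs x + zs z ≤ 0}

/-- The `z*`-subdifferential of `f` at `x₀`. -/
def subdiff [TopologicalSpace X] [AddCommGroup X] [Module ℝ X]
    [TopologicalSpace Z] [AddCommGroup Z] [Module ℝ Z]
    (zs : Z →L[ℝ] ℝ) (f : X → Set Z) (x₀ : X) : Set (X →L[ℝ] ℝ) :=
  {xs | ∀ x : X, dirDer zs f x₀ x ⊆ Sfun xs zs x}

/-- Scalarization `φ_{f,z*}(x) = inf{−z*(z) : z ∈ f(x)}` taking values in `EReal`. -/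
def scalFn [TopologicalSpace Z] [AddCommGroup Z] [Module ℝ Z]
    (zs : Z →L[ℝ] ℝ) (f : X → Set Z) (x : X) : EReal :=
  ⨅ z ∈ f x, ((-(zs z) : ℝ) : EReal)

/-- Inf-residuation on `EReal`: `r −• s = inf {t ∈ ℝ : r ≤ s + t}`. -/
def eresid (r s : EReal) : EReal :=
  sInf {t : EReal | ∃ t' : ℝ, t = (t' : EReal) ∧ r ≤ s + (t' : EReal)}

/-- Scalar directional derivative `φ'_{f,z*}(x₀,x) = inf_{t>0} (1/t)(φ(x₀+tx) −• φ(x₀))`. -/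
def scalDer [AddCommGroup X] [Module ℝ X] [TopologicalSpace Z] [AddCommGroup Z] [Module ℝ Z]
    (zs : Z →L[ℝ] ℝ) (f : X → Set Z) (x₀ x : X) : EReal :=
  ⨅ t ∈ Ioi (0:ℝ), (((1 / t : ℝ) : EReal) * eresid (scalFn zs f (x₀ + t • x)) (scalFn zs f x₀))

/-- Inf-translation `f̂(x; M) = cl co ⋃_{m ∈ M} f(m + x)`. -/
def infTrans [AddCommGroup X] [TopologicalSpace Z] [AddCommGroup Z] [Module ℝ Z]
    (f : X → Set Z) (M : Set X) (x : X) : Set Z :=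
  closure (convexHull ℝ (⋃ m ∈ M, f (m + x)))

end

section Oplus

variable {Z : Type*} [AddCommGroup Z] [TopologicalSpace Z] {A B : Set Z}

theorem add_subset_oplus : A + B ⊆ oplus A B :=
  subset_closure

theorem oplus_eq_empty_iff : oplus A B = ∅ ↔ A = ∅ ∨ B = ∅ :=
  (closure_empty_iff _).trans add_eq_empty

end Oplus

section HalfSpace

variable {Z : Type*} [AddCommGroup Z] [Module ℝ Z] [TopologicalSpace Z]
  {zs : Z →L[ℝ] ℝ} {A B : Set Z}

theorem mem_Hset {z : Z} : z ∈ Hset zs ↔ zs z ≤ 0 :=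
  Iff.rfl

theorem Hset_nonempty : (Hset zs).Nonempty :=
  ⟨0, mem_Hset.2 (map_zero zs).le⟩

theorem oplus_Hset_eq_empty_iff : oplus A (Hset zs) = ∅ ↔ A = ∅ := by
  rw [oplus_eq_empty_iff, or_iff_left Hset_nonempty.ne_empty]

theorem oplus_Hset_eq_univ_of_not_bddAbove (hA : ¬ BddAbove (zs '' A)) :
    oplus A (Hset zs) = univ := by
  refine eq_univ_of_forall fun z ↦ add_subset_oplus ?_
  obtain ⟨_, ⟨a, ha, rfl⟩, hza⟩ := not_bddAbove_iff.1 hA (zs z)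
  have hsub : z - a ∈ Hset zs := by
    rw [mem_Hset, map_sub]
    exact sub_nonpos.2 hza.le
  exact ⟨a, ha, z - a, hsub, add_sub_cancel a z⟩

theorem le_of_mem_oplus_Hset {M : ℝ} (hM : M ∈ upperBounds (zs '' A)) {z : Z}
    (hz : z ∈ oplus A (Hset zs)) : zs z ≤ M := by
  refine closure_minimal (t := {z | zs z ≤ M}) ?_ (isClosed_le zs.continuous continuous_const) hz
  rintro _ ⟨a, ha, h, hh, rfl⟩
  calc zs (a + h) = zs a + zs h := map_add zs a h
    _ ≤ M + 0 := add_le_add (hM (mem_image_of_mem zs ha)) hh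
    _ = M := add_zero M

theorem resid_empty_right : resid zs A ∅ = univ :=
  eq_univ_of_forall fun _ _ hb ↦ hb.elim

theorem resid_eq_univ_of_oplus_eq_univ (hA : oplus A (Hset zs) = univ) :
    resid zs A B = univ :=
  eq_univ_of_forall fun _ _ _ ↦ hA ▸ mem_univ _

theorem Hset_subset_resid_self : Hset zs ⊆ resid zs A A :=
  fun _ hz _ ha ↦ add_subset_oplus (add_mem_add ha hz)

-- Translating `A` by `z` adds `zs z` to the supremum of `zs`, but cannot increase that supremum.
theorem resid_self_subset_Hset (hne : A.Nonempty) (hA : BddAbove (zs '' A)) :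
    resid zs A A ⊆ Hset zs := by
  intro z hz
  have hsup : sSup (zs '' A) ≤ sSup (zs '' A) - zs z := by
    refine csSup_le (hne.image zs) (forall_mem_image.2 fun a ha ↦ le_sub_iff_add_le.2 ?_)
    rw [← map_add]
    exact le_of_mem_oplus_Hset (fun _ ↦ le_csSup hA) (hz a ha)
  exact mem_Hset.2 ((le_sub_self_iff _).1 hsup)

theorem stmt2_general (zs : Z →L[ℝ] ℝ) (A : Set Z) :
    ((oplus A (Hset zs) ≠ univ ∧ oplus A (Hset zs) ≠ ∅) → resid zs A A = Hset zs) ∧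
    ((oplus A (Hset zs) = univ ∨ oplus A (Hset zs) = ∅) → resid zs A A = univ) := by
  constructor
  · rintro ⟨hne_univ, hne_empty⟩
    have hne : A.Nonempty := nonempty_iff_ne_empty.2 (mt oplus_Hset_eq_empty_iff.2 hne_empty)
    have hbdd : BddAbove (zs '' A) := not_imp_comm.1 oplus_Hset_eq_univ_of_not_bddAbove hne_univ
    exact (resid_self_subset_Hset hne hbdd).antisymm Hset_subset_resid_self
  · rintro (huniv | hempty)
    · exact resid_eq_univ_of_oplus_eq_univ huniv
    · obtain rfl : A = ∅ := oplus_Hset_eq_empty_iff.1 hempty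
      exact resid_empty_right

end HalfSpace

theorem stmt2 {Z : Type*} [AddCommGroup Z] [Module ℝ Z] [TopologicalSpace Z]
    [IsTopologicalAddGroup Z] [ContinuousSMul ℝ Z] [LocallyConvexSpace ℝ Z]
    (C : Set Z) (hCconv : Convex ℝ C) (hC0 : (0:Z) ∈ C)
    (hCcone : ∀ t : ℝ, 0 < t → t • C ⊆ C) (hclC : closure C ≠ Set.univ)
    (zs : Z →L[ℝ] ℝ) (hzs : ∀ z ∈ C, zs z ≤ 0) (hzs0 : zs ≠ 0)
    (A : Set Z) (hA : A ∈ Gset C) :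
    ((oplus A (Hset zs) ≠ Set.univ ∧ oplus A (Hset zs) ≠ ∅) → resid zs A A = Hset zs) ∧
    ((oplus A (Hset zs) = Set.univ ∨ oplus A (Hset zs) = ∅) → resid zs A A = Set.univ) :=
  stmt2_general zs A
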